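/- arXiv:2309.16446 — 6 statements merged into one kernel-verified Lean document; each statement's English description precedes it below -/
import Mathlib

section
/- Let A be a commutative Noetherian ring, let a, b ∈ A, assume A is complete and separated for the I-adic topology where I is the ideal generated by a and b, and let N be a finitely generated A-module. Then the sequence {a,b} is strictly N-regular if and only if for all x, y ∈ N with b•x = a•y there exists z ∈ N with x = a•z and y = b•z (equivalently, the first cohomology of the three-term complex N → N ⊕ N → N, with first map x ↦ (a•x, b•x) and second map (x,y) ↦ b•x − a•y, vanishes). Moreover, under these equivalent conditions the zeroth cohomology of this complex also vanishes, i.e. the only x ∈ N with a•x = 0 and b•x = 0 is x = 0. -/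
/-- The sequence `{a, b}` is `N`-regular: multiplication by `a` is injective on `N` and
multiplication by `b` is injective on `N/aN`. -/
def IsSeqRegular {A : Type*} [CommRing A] (a b : A)
    (N : Type*) [AddCommGroup N] [Module A N] : Prop :=
  (∀ x : N, a • x = 0 → x = 0) ∧
    ∀ x : N, (∃ y : N, b • x = a • y) → ∃ z : N, x = a • z

/-- The sequence `{a, b}` is strictly `N`-regular: both `{a, b}` and `{b, a}` are `N`-regular. -/
def IsStrictlySeqRegular {A : Type*} [CommRing A] (a b : A)
    (N : Type*) [AddCommGroup N] [Module A N] : Prop :=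
  IsSeqRegular a b N ∧ IsSeqRegular b a N

theorem inj_of_nakayama_aux {A : Type*} [CommRing A] [IsNoetherianRing A] (c d : A)
    (hc : c ∈ (⊥ : Ideal A).jacobson)
    (N : Type*) [AddCommGroup N] [Module A N] [Module.Finite A N]
    (h : ∀ x : N, d • x = 0 → ∃ z : N, d • z = 0 ∧ x = c • z) (x : N) (hx : d • x = 0) :
    x = 0 := by
  have key : LinearMap.ker (LinearMap.lsmul A N d) = ⊥ := by
    refine Submodule.eq_bot_of_le_smul_of_le_jacobson_bot (Ideal.span {c}) _
      (IsNoetherian.noetherian _) ?_ ?_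
    · intro y hy
      obtain ⟨z, hz, rfl⟩ := h y (by simpa using hy)
      exact Submodule.smul_mem_smul (Ideal.mem_span_singleton_self c) (by simpa using hz)
    · rw [Ideal.span_le]
      simpa using hc
  have hm : x ∈ LinearMap.ker (LinearMap.lsmul A N d) := by simpa using hx
  rw [key] at hm
  simpa using hm

/-- Let `A` be a commutative Noetherian ring, complete and separated for the `(a, b)`-adic
topology, and let `N` be a finitely generated `A`-module.  Then `{a, b}` is strictly
`N`-regular if and only if the first cohomology of the complex
`N → N ⊕ N → N`, `x ↦ (a•x, b•x)`, `(x, y) ↦ b•x - a•y` vanishes, i.e. whenever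
`b • x = a • y` there is `z` with `x = a • z` and `y = b • z`.  Moreover, under these
equivalent conditions the zeroth cohomology also vanishes: `a • x = 0` and `b • x = 0`
imply `x = 0`. -/
theorem isStrictlySeqRegular_iff_H1_eq_zero
    {A : Type*} [CommRing A] [IsNoetherianRing A] (a b : A)
    [IsAdicComplete (Ideal.span {a, b}) A]
    (N : Type*) [AddCommGroup N] [Module A N] [Module.Finite A N] :
    (IsStrictlySeqRegular a b N ↔
      ∀ x y : N, b • x = a • y → ∃ z : N, x = a • z ∧ y = b • z) ∧
    ((∀ x y : N, b • x = a • y → ∃ z : N, x = a • z ∧ y = b • z) →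
      ∀ x : N, a • x = 0 → b • x = 0 → x = 0) := by
  have hJ := IsAdicComplete.le_jacobson_bot (Ideal.span {a, b})
  have ha : a ∈ (⊥ : Ideal A).jacobson := hJ (Ideal.subset_span (by simp))
  have hb : b ∈ (⊥ : Ideal A).jacobson := hJ (Ideal.subset_span (by simp))
  have injA : (∀ x y : N, b • x = a • y → ∃ z : N, x = a • z ∧ y = b • z) →
      ∀ x : N, a • x = 0 → x = 0 := fun h => inj_of_nakayama_aux b a hb N fun x hx => by
    obtain ⟨z, h1, h2⟩ := h 0 x (by simp [hx])
    exact ⟨z, h1.symm, h2⟩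
  have injB : (∀ x y : N, b • x = a • y → ∃ z : N, x = a • z ∧ y = b • z) →
      ∀ x : N, b • x = 0 → x = 0 := fun h => inj_of_nakayama_aux a b ha N fun x hx => by
    obtain ⟨z, h1, h2⟩ := h x 0 (by simp [hx])
    exact ⟨z, h2.symm, h1⟩
  refine ⟨⟨?_, fun h => ⟨⟨injA h, ?_⟩, ⟨injB h, ?_⟩⟩⟩, fun h x hx _ => injA h x hx⟩
  · rintro ⟨⟨h1, h2⟩, -⟩ x y hxy
    obtain ⟨z, rfl⟩ := h2 x ⟨y, hxy⟩
    refine ⟨z, rfl, ?_⟩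
    rw [← sub_eq_zero]
    apply h1
    rw [smul_sub, ← hxy, smul_comm, sub_self]
  · rintro x ⟨y, hxy⟩
    obtain ⟨z, hz, -⟩ := h x y hxy
    exact ⟨z, hz⟩
  · rintro x ⟨y, hxy⟩
    obtain ⟨z, -, hz⟩ := h y x hxy.symm
    exact ⟨z, hz⟩
end

section
/- Let A be a commutative ring, let a, b ∈ A, and let N be an A-module. If multiplication by b is injective on N and multiplication by a is injective on N/bN, then multiplication by b is injective on N/aN; that is, for x, y ∈ N with b•x = a•y there exists z ∈ N with x = a•z. -/
/-- If multiplication by `b` is injective on `N` and multiplication by `a` is injective on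
`N/bN`, then multiplication by `b` is injective on `N/aN`: for `x y : N` with `b • x = a • y`
there exists `z : N` with `x = a • z`. -/
theorem mul_injective_mod_a_of_mul_injective_mod_b
    {A : Type*} [CommRing A] (a b : A)
    (N : Type*) [AddCommGroup N] [Module A N]
    (hb : ∀ x : N, b • x = 0 → x = 0)
    (ha : ∀ x : N, (∃ y : N, a • x = b • y) → ∃ z : N, x = b • z) :
    ∀ x y : N, b • x = a • y → ∃ z : N, x = a • z := by
  intro x y h
  obtain ⟨z, rfl⟩ := ha y ⟨x, h.symm⟩
  refine ⟨z, sub_eq_zero.mp (hb _ ?_)⟩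
  rw [smul_sub, h, smul_comm a b z, sub_self]
end

section
/- Let A be a commutative ring, let a, b ∈ A, and let N be a finitely generated A-module such that the sequence {a,b} is strictly N-regular. Then N equals the intersection of N[1/a] and N[1/b] inside N[1/(ab)]: the canonical maps N → N[1/a], N → N[1/b], N[1/a] → N[1/(ab)] and N[1/b] → N[1/(ab)] are injective, and whenever u ∈ N[1/a] and v ∈ N[1/b] have the same image in N[1/(ab)], there exists a unique w ∈ N whose images in N[1/a] and N[1/b] are u and v respectively. -/
theorem aux_pow_inj {A : Type*} [CommRing A] (a : A) {N : Type*} [AddCommGroup N] [Module A N]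
    (h : ∀ x : N, a • x = 0 → x = 0) (n : ℕ) : ∀ x : N, a ^ n • x = 0 → x = 0 := by
  induction n with
  | zero => intro x hx; simpa using hx
  | succ n ih =>
    intro x hx
    rw [pow_succ, mul_smul] at hx
    exact h _ (ih _ hx)

theorem aux_div_one {A : Type*} [CommRing A] (a b : A) {N : Type*} [AddCommGroup N] [Module A N]
    (h : IsSeqRegular a b N) (n : ℕ) :
    ∀ x y : N, b ^ n • x = a • y → ∃ z : N, x = a • z := by
  induction n with
  | zero => intro x y hx; exact ⟨y, by simpa using hx⟩
  | succ n ih =>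
    intro x y hx
    rw [pow_succ, mul_smul] at hx
    obtain ⟨z, hz⟩ := ih _ _ hx
    exact h.2 x ⟨z, hz⟩

theorem aux_div {A : Type*} [CommRing A] (a b : A) {N : Type*} [AddCommGroup N] [Module A N]
    (h : IsSeqRegular a b N) (n m : ℕ) :
    ∀ x y : N, b ^ n • x = a ^ m • y → ∃ z : N, x = a ^ m • z := by
  induction m with
  | zero => intro x y _; exact ⟨x, by simp⟩
  | succ m ih =>
    intro x y hx
    rw [pow_succ', mul_smul] at hx
    obtain ⟨z, rfl⟩ := aux_div_one a b h n _ _ hx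
    have h2 : b ^ n • z = a ^ m • y := by
      rw [← sub_eq_zero]
      apply h.1
      rw [smul_sub, ← hx, smul_comm a, sub_self]
    obtain ⟨w, rfl⟩ := ih _ _ h2
    exact ⟨w, by rw [pow_succ', mul_smul]⟩

theorem aux_loc {A : Type*} [CommRing A] (a : A) {N M : Type*} [AddCommGroup N] [Module A N]
    [AddCommGroup M] [Module A M] (f : N →ₗ[A] M) [IsLocalizedModule (Submonoid.powers a) f] :
    ((∀ x : N, a • x = 0 → x = 0) → Function.Injective f) ∧
    (∀ u : M, ∃ n : ℕ, ∃ x : N, a ^ n • u = f x) ∧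
    (∀ (n : ℕ) (u v : M), a ^ n • u = a ^ n • v → u = v) := by
  refine ⟨fun h => ?_, fun u => ?_, fun n u v huv => ?_⟩
  · intro x y hxy
    obtain ⟨⟨_, n, rfl⟩, hc⟩ := IsLocalizedModule.exists_of_eq (S := Submonoid.powers a) hxy
    rw [← sub_eq_zero]
    apply aux_pow_inj a h n
    rw [smul_sub, sub_eq_zero]
    exact hc
  · obtain ⟨⟨x, ⟨_, n, rfl⟩⟩, hc⟩ := IsLocalizedModule.surj (Submonoid.powers a) f u
    exact ⟨n, x, hc⟩
  · exact IsLocalizedModule.smul_injective f (⟨a ^ n, n, rfl⟩ : Submonoid.powers a) huv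

theorem aux_g {A : Type*} [CommRing A] (a : A) {N M P : Type*} [AddCommGroup N] [Module A N]
    [AddCommGroup M] [Module A M] [AddCommGroup P] [Module A P]
    (f : N →ₗ[A] M) [IsLocalizedModule (Submonoid.powers a) f] (g : M →ₗ[A] P)
    (h : Function.Injective (g ∘ₗ f)) : Function.Injective g := by
  rw [injective_iff_map_eq_zero]
  intro u hu
  obtain ⟨n, x, hx⟩ := (aux_loc a f).2.1 u
  have : x = 0 := by
    apply h
    rw [LinearMap.comp_apply, ← hx, map_smul, hu, smul_zero, map_zero]
  apply (aux_loc a f).2.2 n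
  rw [hx, this, map_zero, smul_zero]

/-- If `{a, b}` is strictly `N`-regular, then `N = N[1/a] ∩ N[1/b]` inside `N[1/(ab)]`:
the canonical maps `N → N[1/a]`, `N → N[1/b]`, `N[1/a] → N[1/(ab)]`, `N[1/b] → N[1/(ab)]`
are injective, and any pair of elements of `N[1/a]` and `N[1/b]` agreeing in `N[1/(ab)]`
comes from a unique element of `N`. -/
theorem eq_inter_of_isStrictlySeqRegular
    {A : Type*} [CommRing A] (a b : A)
    (N : Type*) [AddCommGroup N] [Module A N] [Module.Finite A N]
    (hreg : IsStrictlySeqRegular a b N)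
    (Na Nb Nab : Type*)
    [AddCommGroup Na] [Module A Na] [AddCommGroup Nb] [Module A Nb]
    [AddCommGroup Nab] [Module A Nab]
    (fa : N →ₗ[A] Na) (fb : N →ₗ[A] Nb) (fab : N →ₗ[A] Nab)
    [IsLocalizedModule (Submonoid.powers a) fa]
    [IsLocalizedModule (Submonoid.powers b) fb]
    [IsLocalizedModule (Submonoid.powers (a * b)) fab]
    (ga : Na →ₗ[A] Nab) (gb : Nb →ₗ[A] Nab)
    (hga : ga ∘ₗ fa = fab) (hgb : gb ∘ₗ fb = fab) :
    Function.Injective fa ∧ Function.Injective fb ∧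
    Function.Injective ga ∧ Function.Injective gb ∧
    ∀ (u : Na) (v : Nb), ga u = gb v → ∃! w : N, fa w = u ∧ fb w = v := by
  obtain ⟨h1, h2⟩ := hreg
  have iab : Function.Injective fab := (aux_loc (a * b) fab).1 fun x hx =>
    h2.1 _ (h1.1 _ (by rwa [mul_smul] at hx))
  have ifa := (aux_loc a fa).1 h1.1
  have iga := aux_g a fa ga (hga ▸ iab)
  have igb := aux_g b fb gb (hgb ▸ iab)
  refine ⟨ifa, (aux_loc b fb).1 h2.1, iga, igb, fun u v huv => ?_⟩
  have ha : ∀ x, ga (fa x) = fab x := fun x => LinearMap.congr_fun hga x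
  have hb : ∀ x, gb (fb x) = fab x := fun x => LinearMap.congr_fun hgb x
  obtain ⟨n, x, hx⟩ := (aux_loc a fa).2.1 u
  obtain ⟨m, y, hy⟩ := (aux_loc b fb).2.1 v
  have key : b ^ m • x = a ^ n • y := by
    apply iab
    rw [map_smul, map_smul, ← ha, ← hb, ← hx, ← hy, map_smul, map_smul, huv, smul_comm]
  obtain ⟨w, rfl⟩ := aux_div a b h1 m n _ _ key
  have hw : fa w = u := by
    apply (aux_loc a fa).2.2 n
    rw [hx, map_smul]
  refine ⟨w, ⟨hw, igb ?_⟩, fun w' hw' => ifa (hw'.1.trans hw.symm)⟩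
  rw [hb, ← ha, hw, huv]
end

section
/- Let A be a commutative ring, let a, b ∈ A, and let N be a finitely generated A-module such that the sequence {a,b} is strictly N-regular. Then for every x ∈ N and every n ∈ ℕ, if the image of x under the canonical map N → N[1/b] lies in the submodule aⁿ·N[1/b], then x ∈ aⁿ·N. -/
theorem aux_one {A : Type*} [CommRing A] (a b : A)
    (N : Type*) [AddCommGroup N] [Module A N] (h : IsSeqRegular a b N) (n : ℕ) :
    ∀ x y : N, b • x = a ^ n • y → ∃ z : N, x = a ^ n • z := by
  induction n with
  | zero => intro x y _; exact ⟨x, by simp⟩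
  | succ n ih =>
    intro x y hxy
    obtain ⟨x', rfl⟩ := h.2 x ⟨a ^ n • y, by rw [hxy, pow_succ', mul_smul]⟩
    have h1 : b • x' = a ^ n • y := by
      rw [← sub_eq_zero]
      apply h.1
      rw [smul_sub, smul_comm a b, hxy, pow_succ', mul_smul, sub_self]
    obtain ⟨z, rfl⟩ := ih x' y h1
    exact ⟨z, by rw [pow_succ', mul_smul]⟩

theorem aux_pow {A : Type*} [CommRing A] (a b : A)
    (N : Type*) [AddCommGroup N] [Module A N] (h : IsSeqRegular a b N) (n k : ℕ) :
    ∀ x y : N, b ^ k • x = a ^ n • y → ∃ z : N, x = a ^ n • z := by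
  induction k with
  | zero => intro x y hxy; exact ⟨y, by simpa using hxy⟩
  | succ k ih =>
    intro x y hxy
    rw [pow_succ', mul_smul] at hxy
    obtain ⟨z, hz⟩ := aux_one a b N h n _ _ hxy
    exact ih x z hz

/-- If `{a, b}` is strictly `N`-regular, and the image of `x : N` in the localization
`N[1/b]` lies in `aⁿ • N[1/b]`, then `x ∈ aⁿ • N`. -/
theorem mem_pow_smul_of_localization_mem_pow_smul
    {A : Type*} [CommRing A] (a b : A)
    (N : Type*) [AddCommGroup N] [Module A N] [Module.Finite A N]
    (hreg : IsStrictlySeqRegular a b N) (x : N) (n : ℕ)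
    (h : ∃ y : LocalizedModule (Submonoid.powers b) N,
      LocalizedModule.mkLinearMap (Submonoid.powers b) N x = a ^ n • y) :
    ∃ z : N, x = a ^ n • z := by
  obtain ⟨y, hy⟩ := h
  induction y using LocalizedModule.induction_on with
  | h m s =>
    rw [LocalizedModule.mkLinearMap_apply, LocalizedModule.smul'_mk, LocalizedModule.mk_eq] at hy
    obtain ⟨⟨_, j, rfl⟩, hu⟩ := hy
    obtain ⟨_, k, rfl⟩ := s
    simp only [Submonoid.smul_def, one_smul, OneMemClass.coe_one] at hu
    refine aux_pow a b N hreg.1 n (j + k) x (b ^ j • m) ?_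
    rw [pow_add, mul_smul, smul_comm (a ^ n)]
    exact hu
end

section
/- Let A be a commutative ring, let p be a prime number, and let 𝔭 ⊂ A be a prime ideal with p ∈ 𝔭. If the p-power map x ↦ x^p is surjective on A/pA, then the p-power map x ↦ x^p is surjective on A_𝔭/pA_𝔭, where A_𝔭 denotes the localization of A at the prime 𝔭. -/
/-- If the `p`-power map is surjective on `A/pA`, then it is surjective on
`A_𝔭/pA_𝔭`, for any prime ideal `𝔭` of `A` containing the prime number `p`. -/
theorem pow_p_surjective_localization_atPrime
    {A : Type*} [CommRing A] (p : ℕ) (hp : p.Prime)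
    (𝔭 : Ideal A) [𝔭.IsPrime] (hp𝔭 : (p : A) ∈ 𝔭)
    (h : Function.Surjective fun x : A ⧸ Ideal.span {(p : A)} => x ^ p) :
    Function.Surjective
      fun x : Localization.AtPrime 𝔭 ⧸ Ideal.span {(p : Localization.AtPrime 𝔭)} => x ^ p := by
  intro x
  obtain ⟨x, rfl⟩ := Ideal.Quotient.mk_surjective x
  obtain ⟨⟨a, s⟩, hx⟩ := IsLocalization.surj 𝔭.primeCompl x
  obtain ⟨u, hu⟩ := (IsLocalization.map_units (Localization.AtPrime 𝔭) s).exists_right_inv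
  obtain ⟨b, hb⟩ := h (Ideal.Quotient.mk _ (a * (s : A) ^ (p - 1)))
  obtain ⟨b, rfl⟩ := Ideal.Quotient.mk_surjective b
  simp only [← map_pow] at hb
  rw [Ideal.Quotient.eq, Ideal.mem_span_singleton] at hb
  obtain ⟨c, hc⟩ := hb
  refine ⟨Ideal.Quotient.mk _ (algebraMap A _ b * u), ?_⟩
  simp only [← map_pow]
  rw [Ideal.Quotient.eq, Ideal.mem_span_singleton]
  refine ⟨algebraMap A _ c * u ^ p, ?_⟩
  have hc' := congrArg (algebraMap A (Localization.AtPrime 𝔭)) hc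
  simp only [map_sub, map_mul, map_pow, map_natCast] at hc'
  simp only at hx
  rw [← hx] at hc'
  have h1 : (algebraMap A (Localization.AtPrime 𝔭) s) ^ p * u ^ p = 1 := by
    rw [← mul_pow, hu, one_pow]
  have h2 : (algebraMap A (Localization.AtPrime 𝔭) s) *
      (algebraMap A (Localization.AtPrime 𝔭) s) ^ (p - 1) =
      (algebraMap A (Localization.AtPrime 𝔭) s) ^ p := mul_pow_sub_one hp.ne_zero _
  rw [mul_assoc x, h2] at hc'
  rw [mul_pow]
  linear_combination u ^ p * hc' + x * h1
end

section
/- Let A be a commutative Noetherian ring and let a ∈ A. Let Â denote the a-adic completion of A (the inverse limit of A/aⁿA) and A[1/a] the localization of A away from a. Then the canonical ring homomorphism A → Â × A[1/a] is faithfully flat. -/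
theorem aux_smul_top_ne_top {A M : Type*} [CommRing A] [AddCommGroup M] [Module A M]
    (m : Ideal A) (f : M →ₗ[A] A ⧸ m) (x : M) (hx : f x ≠ 0) :
    m • (⊤ : Submodule A M) ≠ ⊤ := by
  intro h
  have h1 : m • (⊤ : Submodule A M) ≤ LinearMap.ker f := by
    rw [Submodule.smul_le]
    intro r hr y _
    rw [LinearMap.mem_ker, map_smul]
    obtain ⟨z, hz⟩ := Ideal.Quotient.mk_surjective (f y)
    rw [← hz, Algebra.smul_def, Ideal.Quotient.algebraMap_eq, Ideal.Quotient.eq_zero_iff_mem.mpr hr,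
      zero_mul]
  rw [h] at h1
  exact hx (h1 (Submodule.mem_top (x := x)))

theorem aux_flat_prod {A M N : Type*} [CommRing A] [AddCommGroup M] [Module A M]
    [AddCommGroup N] [Module A N] [Module.Flat A M] [Module.Flat A N] :
    Module.Flat A (M × N) := by
  rw [Module.Flat.iff_lTensor_preserves_injective_linearMap]
  intro P Q _ _ _ _ f hf
  have h1 := Module.Flat.lTensor_preserves_injective_linearMap (M := M) f hf
  have h2 := Module.Flat.lTensor_preserves_injective_linearMap (M := N) f hf
  have : ((TensorProduct.prodLeft A A M N Q).toLinearMap ∘ₗ f.lTensor (M × N)) =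
    (LinearMap.prodMap (f.lTensor M) (f.lTensor N)) ∘ₗ
      (TensorProduct.prodLeft A A M N P).toLinearMap := by
    ext <;> simp
  have h3 : Function.Injective
      ((TensorProduct.prodLeft A A M N Q).toLinearMap ∘ₗ f.lTensor (M × N)) := by
    rw [this]
    exact (Function.Injective.prodMap h1 h2).comp (TensorProduct.prodLeft A A M N P).injective
  rw [LinearMap.coe_comp] at h3
  exact Function.Injective.of_comp h3

/-- For a commutative Noetherian ring `A` and `a ∈ A`, the canonical ring homomorphism
`A → Â × A[1/a]`, where `Â` is the `a`-adic completion of `A` and `A[1/a]` the localization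
away from `a`, is faithfully flat. -/
theorem faithfullyFlat_adicCompletion_prod_localizationAway
    {A : Type*} [CommRing A] [IsNoetherianRing A] (a : A) :
    Module.FaithfullyFlat A (AdicCompletion (Ideal.span {a}) A × Localization.Away a) := by
  have hf1 : Module.Flat A (AdicCompletion (Ideal.span {a}) A) :=
    AdicCompletion.flat_of_isNoetherian _
  have hf2 : Module.Flat A (Localization.Away a) :=
    IsLocalization.flat _ (Submonoid.powers a)
  have hf : Module.Flat A (AdicCompletion (Ideal.span {a}) A × Localization.Away a) :=
    aux_flat_prod
  refine ⟨fun {m} hm => ?_⟩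
  have : m.IsMaximal := hm
  by_cases ha : a ∈ m
  · have hle : Ideal.span {a} ≤ m := by
      rwa [Ideal.span_singleton_le_iff_mem]
    let g : AdicCompletion (Ideal.span {a}) A →ₐ[A] A ⧸ m :=
      (Ideal.Quotient.factorₐ A hle).comp (AdicCompletion.evalOneₐ (Ideal.span {a}))
    refine aux_smul_top_ne_top m (g.toLinearMap ∘ₗ LinearMap.fst A _ _) (1, 0) ?_
    change g 1 ≠ 0
    rw [map_one]
    exact one_ne_zero
  · letI := Ideal.Quotient.field m
    have hu : ∀ y : Submonoid.powers a, IsUnit (Algebra.ofId A (A ⧸ m) y) := by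
      rintro ⟨_, n, rfl⟩
      rw [map_pow]
      refine IsUnit.pow _ (isUnit_iff_ne_zero.mpr ?_)
      exact fun h => ha (Ideal.Quotient.eq_zero_iff_mem.mp h)
    let g : Localization.Away a →ₐ[A] A ⧸ m := IsLocalization.liftAlgHom hu
    refine aux_smul_top_ne_top m (g.toLinearMap ∘ₗ LinearMap.snd A _ _) (0, 1) ?_
    change g 1 ≠ 0
    rw [map_one]
    exact one_ne_zero
end
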